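/- The split-among-stations model always provides a solution that is better than, or equally good as, the integrated model: for every feasible solution of the integrated model there exists a feasible solution of the split-among-stations model whose objective value ∑_{p∈P} ∑_{s∈S} x_{ps} + W_u · ∑_{s∈S} u_s is less than or equal to that of the given integrated solution; consequently, the infimum (in ℕ) of the set of objective values attained by feasible solutions of the split-among-stations model is less than or equal to the infimum of the set of objective values attained by feasible solutions of the integrated model. -/

import Mathlib

open Finset

/-- Feasibility of the INTEGRATED pick-order-assignment / pick-pod-selection model:
binary variables `x` (pods to stations), `y` (orders to stations),
`z` (order lines to stations, meaningful for `i ∈ Io o`), and slack `u : S → ℕ`,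
satisfying constraints (i)–(v). -/
def IntegratedFeasible {S O P I : Type*} [Fintype S] [Fintype O]
    (Io : O → Finset I) (Pi : I → Finset P) (Ps : S → Finset P) (C : S → ℕ)
    (x : P → S → ℕ) (y : O → S → ℕ) (z : I → O → S → ℕ) (u : S → ℕ) : Prop :=
  (∀ p s, x p s ≤ 1) ∧
  (∀ o s, y o s ≤ 1) ∧
  (∀ o : O, ∀ i ∈ Io o, ∀ s : S, z i o s ≤ 1) ∧
  -- (i) y_{os} = y_{ios}
  (∀ o : O, ∀ i ∈ Io o, ∀ s : S, y o s = z i o s) ∧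
  -- (ii) ∑_s y_{os} ≤ 1
  (∀ o : O, ∑ s : S, y o s ≤ 1) ∧
  -- (iii) ∑_o ∑_{i∈I_o} y_{ios} + u_s = C_s
  (∀ s : S, (∑ o : O, ∑ i ∈ Io o, z i o s) + u s = C s) ∧
  -- (iv) ∑_{p∈P_i} x_{ps} ≥ y_{ios}
  (∀ o : O, ∀ i ∈ Io o, ∀ s : S, z i o s ≤ ∑ p ∈ Pi i, x p s) ∧
  -- (v) x_{ps} = 1 for p currently at s
  (∀ s : S, ∀ p ∈ Ps s, x p s = 1)

/-- Feasibility of the SPLIT-AMONG-STATIONS model: additionally binary `yo`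
(order active) and nonnegative integers `e` (extra stations), satisfying
(iii), (iv), (v), (i'), (ii'), (vi), (vii), (viii). -/
def SplitFeasible {S O P I : Type*} [Fintype S] [Fintype O]
    (Io : O → Finset I) (Pi : I → Finset P) (Ps : S → Finset P) (C : S → ℕ)
    (x : P → S → ℕ) (y : O → S → ℕ) (z : I → O → S → ℕ) (u : S → ℕ)
    (yo : O → ℕ) (e : O → ℕ) : Prop :=
  (∀ p s, x p s ≤ 1) ∧
  (∀ o s, y o s ≤ 1) ∧
  (∀ o : O, ∀ i ∈ Io o, ∀ s : S, z i o s ≤ 1) ∧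
  (∀ o : O, yo o ≤ 1) ∧
  -- (iii)
  (∀ s : S, (∑ o : O, ∑ i ∈ Io o, z i o s) + u s = C s) ∧
  -- (iv)
  (∀ o : O, ∀ i ∈ Io o, ∀ s : S, z i o s ≤ ∑ p ∈ Pi i, x p s) ∧
  -- (v)
  (∀ s : S, ∀ p ∈ Ps s, x p s = 1) ∧
  -- (i') y_{os} ≥ y_{ios}
  (∀ o : O, ∀ i ∈ Io o, ∀ s : S, z i o s ≤ y o s) ∧
  -- (ii') ∑_s y_{os} ≥ y_o
  (∀ o : O, yo o ≤ ∑ s : S, y o s) ∧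
  -- (vi) ∑_s y_{ios} = y_o
  (∀ o : O, ∀ i ∈ Io o, ∑ s : S, z i o s = yo o) ∧
  -- (vii) y_o ≥ y_{os}
  (∀ o : O, ∀ s : S, y o s ≤ yo o) ∧
  -- (viii) ∑_{i∈I_o} y_{ios} ≥ y_{os}
  (∀ o : O, ∀ s : S, y o s ≤ ∑ i ∈ Io o, z i o s)

/-- Feasibility of the SPLIT-OVER-TIME model: additionally binary `yb`
(order line moved back to backlog), satisfying (iii), (iv), (v), (i'),
(ii'), (vii), (viii) and (vi'). -/
def TimeSplitFeasible {S O P I : Type*} [Fintype S] [Fintype O]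
    (Io : O → Finset I) (Pi : I → Finset P) (Ps : S → Finset P) (C : S → ℕ)
    (x : P → S → ℕ) (y : O → S → ℕ) (z : I → O → S → ℕ) (u : S → ℕ)
    (yo : O → ℕ) (e : O → ℕ) (yb : I → O → ℕ) : Prop :=
  (∀ p s, x p s ≤ 1) ∧
  (∀ o s, y o s ≤ 1) ∧
  (∀ o : O, ∀ i ∈ Io o, ∀ s : S, z i o s ≤ 1) ∧
  (∀ o : O, yo o ≤ 1) ∧
  (∀ o : O, ∀ i ∈ Io o, yb i o ≤ 1) ∧
  -- (iii)
  (∀ s : S, (∑ o : O, ∑ i ∈ Io o, z i o s) + u s = C s) ∧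
  -- (iv)
  (∀ o : O, ∀ i ∈ Io o, ∀ s : S, z i o s ≤ ∑ p ∈ Pi i, x p s) ∧
  -- (v)
  (∀ s : S, ∀ p ∈ Ps s, x p s = 1) ∧
  -- (i')
  (∀ o : O, ∀ i ∈ Io o, ∀ s : S, z i o s ≤ y o s) ∧
  -- (ii')
  (∀ o : O, yo o ≤ ∑ s : S, y o s) ∧
  -- (vii)
  (∀ o : O, ∀ s : S, y o s ≤ yo o) ∧
  -- (viii)
  (∀ o : O, ∀ s : S, y o s ≤ ∑ i ∈ Io o, z i o s) ∧
  -- (vi') ∑_s y_{ios} + y^b_{io} = y_o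
  (∀ o : O, ∀ i ∈ Io o, (∑ s : S, z i o s) + yb i o = yo o)

/-- Objective value: ∑_p ∑_s x_{ps} + W_u · ∑_s u_s. -/
def objectiveValue {S P : Type*} [Fintype S] [Fintype P]
    (Wu : ℕ) (x : P → S → ℕ) (u : S → ℕ) : ℕ :=
  (∑ p : P, ∑ s : S, x p s) + Wu * ∑ s : S, u s

/-- The split-among-stations model always provides a solution that
is better than, or equally good as, the integrated model; consequently the
infimum of split-among-stations objective values is at most the infimum of
integrated objective values. -/
theorem split_among_stations_at_least_as_good_as_integrated
    {S O P I : Type*} [Fintype S] [Fintype O] [Fintype P]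
    (Io : O → Finset I) (Pi : I → Finset P) (Ps : S → Finset P) (C : S → ℕ)
    (Wu : ℕ) (hWu : 0 < Wu)
    (hIo : ∀ o : O, (Io o).Nonempty) :
    (∀ (x : P → S → ℕ) (y : O → S → ℕ) (z : I → O → S → ℕ) (u : S → ℕ),
        IntegratedFeasible Io Pi Ps C x y z u →
        ∃ (x' : P → S → ℕ) (y' : O → S → ℕ) (z' : I → O → S → ℕ) (u' : S → ℕ)
          (yo : O → ℕ) (e : O → ℕ),
          SplitFeasible Io Pi Ps C x' y' z' u' yo e ∧
            objectiveValue Wu x' u' ≤ objectiveValue Wu x u) ∧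
      sInf {v : ℕ | ∃ (x : P → S → ℕ) (y : O → S → ℕ) (z : I → O → S → ℕ)
              (u : S → ℕ) (yo : O → ℕ) (e : O → ℕ),
              SplitFeasible Io Pi Ps C x y z u yo e ∧ objectiveValue Wu x u = v}
        ≤ sInf {v : ℕ | ∃ (x : P → S → ℕ) (y : O → S → ℕ) (z : I → O → S → ℕ)
              (u : S → ℕ),
              IntegratedFeasible Io Pi Ps C x y z u ∧ objectiveValue Wu x u = v} := by
  have key : ∀ (x : P → S → ℕ) (y : O → S → ℕ) (z : I → O → S → ℕ) (u : S → ℕ),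
      IntegratedFeasible Io Pi Ps C x y z u →
        SplitFeasible Io Pi Ps C x y z u (fun o => ∑ s : S, y o s) (fun _ => 0) := by
    rintro x y z u ⟨h1, h2, h3, h4, h5, h6, h7, h8⟩
    refine ⟨h1, h2, h3, h5, h6, h7, h8, fun o i hi s => (h4 o i hi s).ge, fun o => le_rfl,
      fun o i hi => Finset.sum_congr rfl fun s _ => (h4 o i hi s).symm,
      fun o s => Finset.single_le_sum (f := fun s => y o s) (fun _ _ => Nat.zero_le _)
        (Finset.mem_univ s), fun o s => ?_⟩
    obtain ⟨i, hi⟩ := hIo o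
    rw [h4 o i hi s]
    exact Finset.single_le_sum (f := fun i => z i o s) (fun _ _ => Nat.zero_le _) hi
  refine ⟨fun x y z u h => ⟨x, y, z, u, _, _, key x y z u h, le_rfl⟩, ?_⟩
  -- the integrated model is always feasible: all pods everywhere, no order assigned
  have hne : {v : ℕ | ∃ (x : P → S → ℕ) (y : O → S → ℕ) (z : I → O → S → ℕ) (u : S → ℕ),
      IntegratedFeasible Io Pi Ps C x y z u ∧ objectiveValue Wu x u = v}.Nonempty := by
    refine ⟨_, fun _ _ => 1, fun _ _ => 0, fun _ _ _ => 0, C, ?_, rfl⟩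
    simp [IntegratedFeasible]
  obtain ⟨x, y, z, u, h, hv⟩ := Nat.sInf_mem hne
  exact Nat.sInf_le ⟨x, y, z, u, _, _, key x y z u h, hv⟩
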